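/- Let f_n, g_n, f, g ∈ C([0,1], ℝ) with f(0) = g(0) = f_n(0) = g_n(0) = 0, and suppose f_n → f and g_n → g uniformly on [0,1]. Then sup{a ≥ 0 : τ^{f_n}_a + τ^{g_n}_a ≤ 1} → sup{a ≥ 0 : τ^f_a + τ^g_a ≤ 1} as n → ∞ (the suprema being taken over those a for which both hitting times are finite). -/

import Mathlib

open MeasureTheory ProbabilityTheory Filter Set
open scoped ENNReal NNReal Classical Topology

namespace CompetitiveErosion

/-! ### Hitting times of continuous functions on `[0,1]` -/

/-- `τ^φ_a = inf {t ∈ [0,1] : |φ(t)| = a}`, the first time `|φ|` hits level `a`. -/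
noncomputable def tauH (φ : ℝ → ℝ) (a : ℝ) : ℝ :=
  sInf {t : ℝ | t ∈ Set.Icc (0 : ℝ) 1 ∧ |φ t| = a}

/-- `sup {a ≥ 0 : τ^f_a + τ^g_a ≤ 1}`, the supremum taken over those `a ≥ 0` for which
both hitting times are finite (i.e. `|f|` and `|g|` both attain the value `a` on `[0,1]`). -/
noncomputable def zOf (f g : ℝ → ℝ) : ℝ :=
  sSup {a : ℝ | 0 ≤ a ∧ (∃ t ∈ Set.Icc (0:ℝ) 1, |f t| = a) ∧
    (∃ t ∈ Set.Icc (0:ℝ) 1, |g t| = a) ∧ tauH f a + tauH g a ≤ 1}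

/-!
Since `|φ|` starts from `0`, the intermediate value theorem shows that it has hit a level `a ≥ 0`
by time `s` exactly when `|φ| ≥ a` somewhere on `[0, s]`. Hence the constrained level of `f` and `g`
is the supremum of `min |f s| |g t|` over the triangle `s, t ≥ 0`, `s + t ≤ 1`, in which no hitting
time occurs any more, and suprema are continuous under uniform convergence.
-/

section Supremum

variable {α : Type*} {s : Set α}

theorem sSup_image_le_sSup_image_add {f g : α → ℝ} {ε : ℝ} (hs : s.Nonempty)
    (hg : BddAbove (g '' s)) (hfg : ∀ x ∈ s, f x ≤ g x + ε) :
    sSup (f '' s) ≤ sSup (g '' s) + ε :=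
  csSup_le (hs.image f) <| forall_mem_image.2 fun x hx =>
    (hfg x hx).trans (add_le_add_left (le_csSup hg (mem_image_of_mem g hx)) ε)

theorem abs_sSup_image_sub_sSup_image_le {f g : α → ℝ} {ε : ℝ} (hs : s.Nonempty)
    (hg : BddAbove (g '' s)) (hfg : ∀ x ∈ s, |f x - g x| ≤ ε) :
    |sSup (f '' s) - sSup (g '' s)| ≤ ε := by
  have f_le : ∀ x ∈ s, f x ≤ g x + ε := fun x hx => by
    linarith [le_of_abs_le (hfg x hx)]
  have g_le : ∀ x ∈ s, g x ≤ f x + ε := fun x hx => by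
    linarith [neg_le_of_abs_le (hfg x hx)]
  have hf : BddAbove (f '' s) := by
    obtain ⟨C, hC⟩ := hg
    exact ⟨C + ε, forall_mem_image.2 fun x hx =>
      (f_le x hx).trans (add_le_add_left (hC (mem_image_of_mem g hx)) ε)⟩
  rw [abs_sub_le_iff, sub_le_iff_le_add', sub_le_iff_le_add']
  exact ⟨sSup_image_le_sSup_image_add hs hg f_le, sSup_image_le_sSup_image_add hs hf g_le⟩

theorem tendsto_sSup_image_of_tendstoUniformlyOn {ι : Type*} {l : Filter ι} {F : ι → α → ℝ}
    {f : α → ℝ} (hF : TendstoUniformlyOn F f l s) (hs : s.Nonempty) (hf : BddAbove (f '' s)) :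
    Tendsto (fun i => sSup (F i '' s)) l (𝓝 (sSup (f '' s))) := by
  rw [Metric.tendsto_nhds]
  intro ε hε
  filter_upwards [Metric.tendstoUniformlyOn_iff.1 hF (ε / 2) (half_pos hε)] with i hi
  have hle : ∀ x ∈ s, |F i x - f x| ≤ ε / 2 := fun x hx => by
    simpa only [Real.dist_eq, abs_sub_comm] using (hi x hx).le
  exact (abs_sSup_image_sub_sSup_image_le hs hf hle).trans_lt (half_lt_self hε)

end Supremum

section HittingTime

variable {φ : ℝ → ℝ} {a s : ℝ}

theorem bddBelow_hittingTimes : BddBelow {t : ℝ | t ∈ Icc (0 : ℝ) 1 ∧ |φ t| = a} :=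
  ⟨0, fun _ ht => ht.1.1⟩

theorem tauH_mem_Icc_and_abs_eq (hφ : ContinuousOn φ (Icc 0 1))
    (ha : ∃ t ∈ Icc (0 : ℝ) 1, |φ t| = a) :
    tauH φ a ∈ Icc (0 : ℝ) 1 ∧ |φ (tauH φ a)| = a :=
  (hφ.abs.preimage_isClosed_of_isClosed isClosed_Icc isClosed_singleton).csInf_mem
    ha bddBelow_hittingTimes

theorem exists_abs_eq_and_tauH_le (hφ : ContinuousOn φ (Icc 0 1)) (hφ0 : φ 0 = 0)
    (ha : 0 ≤ a) (hs : s ∈ Icc (0 : ℝ) 1) (has : a ≤ |φ s|) :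
    (∃ t ∈ Icc (0 : ℝ) 1, |φ t| = a) ∧ tauH φ a ≤ s := by
  have hsub : Icc 0 s ⊆ Icc (0 : ℝ) 1 := Icc_subset_Icc_right hs.2
  have ha_between : a ∈ Icc |φ 0| |φ s| := ⟨by rwa [hφ0, abs_zero], has⟩
  obtain ⟨t, ht, hta⟩ := intermediate_value_Icc hs.1 (hφ.abs.mono hsub) ha_between
  exact ⟨⟨t, hsub ht, hta⟩, (csInf_le bddBelow_hittingTimes ⟨hsub ht, hta⟩).trans ht.2⟩

end HittingTime

/-- The pairs of times in `[0,1]` with sum at most `1`: the values that the constraint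
`τ^f_a + τ^g_a ≤ 1` allows for the two hitting times. -/
def timeTriangle : Set (ℝ × ℝ) :=
  {p | p.1 ∈ Icc 0 1 ∧ p.2 ∈ Icc 0 1 ∧ p.1 + p.2 ≤ 1}

/-- The function `(s, t) ↦ min |f s| |g t|`, the highest level that both `|f|` at time `s` and `|g|`
at time `t` lie above. -/
def minAbs (f g : ℝ → ℝ) (p : ℝ × ℝ) : ℝ :=
  min |f p.1| |g p.2|

theorem timeTriangle_nonempty : timeTriangle.Nonempty :=
  ⟨0, by simp [timeTriangle]⟩

section ConstrainedLevel

variable {f g : ℝ → ℝ}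

theorem bddAbove_minAbs_image_timeTriangle (hf : ContinuousOn f (Icc 0 1)) :
    BddAbove (minAbs f g '' timeTriangle) := by
  obtain ⟨C, hC⟩ := isCompact_Icc.bddAbove_image hf.abs
  exact ⟨C, forall_mem_image.2 fun p hp =>
    (min_le_left _ _).trans (hC (mem_image_of_mem _ hp.1))⟩

theorem zOf_eq_sSup_minAbs (hf : ContinuousOn f (Icc 0 1)) (hg : ContinuousOn g (Icc 0 1))
    (hf0 : f 0 = 0) (hg0 : g 0 = 0) :
    zOf f g = sSup (minAbs f g '' timeTriangle) := by
  refine csSup_eq_csSup_of_forall_exists_le ?_ (forall_mem_image.2 ?_)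
  · rintro a ⟨-, hfa, hga, hsum⟩
    obtain ⟨hs, hfs⟩ := tauH_mem_Icc_and_abs_eq hf hfa
    obtain ⟨ht, hgt⟩ := tauH_mem_Icc_and_abs_eq hg hga
    exact ⟨_, mem_image_of_mem _ (show (tauH f a, tauH g a) ∈ timeTriangle from ⟨hs, ht, hsum⟩),
      le_min hfs.ge hgt.ge⟩
  · rintro ⟨s, t⟩ ⟨hs, ht, hst⟩
    have hnonneg : 0 ≤ minAbs f g (s, t) := le_min (abs_nonneg _) (abs_nonneg _)
    obtain ⟨hf_hits, hfs⟩ := exists_abs_eq_and_tauH_le hf hf0 hnonneg hs (min_le_left _ _)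
    obtain ⟨hg_hits, hgt⟩ := exists_abs_eq_and_tauH_le hg hg0 hnonneg ht (min_le_right _ _)
    exact ⟨_, ⟨hnonneg, hf_hits, hg_hits, (add_le_add hfs hgt).trans hst⟩, le_rfl⟩

variable {ι : Type*} {l : Filter ι} {fs gs : ι → ℝ → ℝ}

theorem tendstoUniformlyOn_minAbs {s t : Set ℝ} (hf : TendstoUniformlyOn fs f l s)
    (hg : TendstoUniformlyOn gs g l t) :
    TendstoUniformlyOn (fun i => minAbs (fs i) (gs i)) (minAbs f g) l (s ×ˢ t) := by
  have huc : UniformContinuous fun p : ℝ × ℝ => min |p.1| |p.2| :=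
    lipschitzWith_min.uniformContinuous.comp
      (Real.uniformContinuous_abs.prodMap Real.uniformContinuous_abs)
  exact fun u hu => (huc.comp_tendstoUniformlyOn (hf.prodMap hg) u hu).diag_of_prod

theorem constrained_level_continuity_general
    (hf : ContinuousOn f (Icc 0 1)) (hg : ContinuousOn g (Icc 0 1))
    (hfs : ∀ᶠ i in l, ContinuousOn (fs i) (Icc 0 1))
    (hgs : ∀ᶠ i in l, ContinuousOn (gs i) (Icc 0 1))
    (hf0 : f 0 = 0) (hg0 : g 0 = 0) (hfs0 : ∀ᶠ i in l, fs i 0 = 0) (hgs0 : ∀ᶠ i in l, gs i 0 = 0)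
    (hfconv : TendstoUniformlyOn fs f l (Icc 0 1))
    (hgconv : TendstoUniformlyOn gs g l (Icc 0 1)) :
    Tendsto (fun i => zOf (fs i) (gs i)) l (𝓝 (zOf f g)) := by
  have hmin : TendstoUniformlyOn (fun i => minAbs (fs i) (gs i)) (minAbs f g) l timeTriangle :=
    (tendstoUniformlyOn_minAbs hfconv hgconv).mono fun _ hp => ⟨hp.1, hp.2.1⟩
  rw [zOf_eq_sSup_minAbs hf hg hf0 hg0]
  refine (tendsto_sSup_image_of_tendstoUniformlyOn hmin timeTriangle_nonempty
    (bddAbove_minAbs_image_timeTriangle hf)).congr' ?_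
  filter_upwards [hfs, hgs, hfs0, hgs0] with i hfi hgi hfi0 hgi0
  exact (zOf_eq_sSup_minAbs hfi hgi hfi0 hgi0).symm

end ConstrainedLevel

/-- **Lemma (continuity of the constrained level).** If `f_n → f` and `g_n → g`
uniformly on `[0,1]`, all functions being continuous on `[0,1]` and vanishing at `0`,
then `sup {a ≥ 0 : τ^{f_n}_a + τ^{g_n}_a ≤ 1} → sup {a ≥ 0 : τ^f_a + τ^g_a ≤ 1}`. -/
theorem constrained_level_continuity
    (f g : ℝ → ℝ) (fs gs : ℕ → ℝ → ℝ)
    (hf : ContinuousOn f (Set.Icc 0 1)) (hg : ContinuousOn g (Set.Icc 0 1))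
    (hfs : ∀ n, ContinuousOn (fs n) (Set.Icc 0 1))
    (hgs : ∀ n, ContinuousOn (gs n) (Set.Icc 0 1))
    (hf0 : f 0 = 0) (hg0 : g 0 = 0) (hfs0 : ∀ n, fs n 0 = 0) (hgs0 : ∀ n, gs n 0 = 0)
    (hfconv : TendstoUniformlyOn fs f atTop (Set.Icc 0 1))
    (hgconv : TendstoUniformlyOn gs g atTop (Set.Icc 0 1)) :
    Tendsto (fun n => zOf (fs n) (gs n)) atTop (𝓝 (zOf f g)) :=
  constrained_level_continuity_general hf hg (.of_forall hfs) (.of_forall hgs) hf0 hg0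
    (.of_forall hfs0) (.of_forall hgs0) hfconv hgconv

end CompetitiveErosion
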